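/- Let K₃,₃⁺ be the graph obtained from the complete bipartite graph K₃,₃ by subdividing one edge once (equivalently, the graph obtained from the 5-cycle by replacing its vertices by independent sets of orders 1, 1, 1, 2, 2 in cyclic order). Then K₃,₃⁺ is connected, has maximum degree 3, n(K₃,₃⁺) = 7, and ν_s(K₃,₃⁺) = 1; in particular ν_s(K₃,₃⁺) < n(K₃,₃⁺)/((⌈3/2⌉+1)(⌊3/2⌋+1)) = 7/6, so the bound ν_s(G) ≥ n(G)/((⌈Δ/2⌉+1)(⌊Δ/2⌋+1)) fails for K₃,₃⁺. -/

import Mathlib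

/-- A finset `M` of edges is an *induced matching* of `G` if every element of `M` is an
edge of `G`, no two distinct edges of `M` share an endvertex, and no edge of `G` joins
an endvertex of one edge of `M` to an endvertex of another edge of `M`. -/
def IsInducedMatching {V : Type*} (G : SimpleGraph V) (M : Finset (Sym2 V)) : Prop :=
  (M : Set (Sym2 V)) ⊆ G.edgeSet ∧
    ∀ e ∈ M, ∀ f ∈ M, e ≠ f → ∀ x ∈ e, ∀ y ∈ f, x ≠ y ∧ ¬ G.Adj x y

/-- The induced (strong) matching number `ν_s(G)`: the maximum size of an induced matching. -/
noncomputable def indMatchNum {V : Type*} (G : SimpleGraph V) : ℕ :=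
  sSup {n : ℕ | ∃ M : Finset (Sym2 V), IsInducedMatching G M ∧ M.card = n}

/-- Base relation for `K₃,₃⁺`, the graph obtained from `K₃,₃` with parts
`{a₀,a₁,a₂}` (the left `Fin 3`) and `{b₀,b₁,b₂}` (the right `Fin 3`) by subdividing the
edge `a₀b₀` once with the new vertex `w` (the `Unit` summand): all edges `aᵢbⱼ` are kept
except `a₀b₀`, and `w` is adjacent exactly to `a₀` and `b₀`. -/
def K33plusRel : (Fin 3 ⊕ Fin 3 ⊕ Unit) → (Fin 3 ⊕ Fin 3 ⊕ Unit) → Bool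
  | Sum.inl i, Sum.inr (Sum.inl j) => !(decide (i = 0) && decide (j = 0))
  | Sum.inl i, Sum.inr (Sum.inr _) => decide (i = 0)
  | Sum.inr (Sum.inl j), Sum.inr (Sum.inr _) => decide (j = 0)
  | _, _ => false

/-- `K₃,₃⁺`: the complete bipartite graph `K₃,₃` with one edge subdivided once. -/
def K33plus : SimpleGraph (Fin 3 ⊕ Fin 3 ⊕ Unit) :=
  SimpleGraph.fromRel (fun a b => K33plusRel a b = true)

instance : DecidableRel K33plus.Adj := fun a b =>
  inferInstanceAs (Decidable (a ≠ b ∧ (K33plusRel a b = true ∨ K33plusRel b a = true)))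

lemma IsInducedMatching.card_le_indMatchNum {V : Type*} [Finite V] {G : SimpleGraph V}
    {M : Finset (Sym2 V)} (hM : IsInducedMatching G M) : M.card ≤ indMatchNum G := by
  have := Fintype.ofFinite (Sym2 V)
  refine le_csSup ⟨Fintype.card (Sym2 V), ?_⟩ ⟨M, hM, rfl⟩
  rintro n ⟨N, -, rfl⟩
  exact N.card_le_univ

lemma isInducedMatching_singleton {V : Type*} {G : SimpleGraph V} {e : Sym2 V}
    (he : e ∈ G.edgeSet) : IsInducedMatching G {e} := by
  refine ⟨by simpa using he, ?_⟩
  intro e₁ h₁ e₂ h₂ hne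
  rw [Finset.mem_singleton] at h₁ h₂
  exact absurd (h₁.trans h₂.symm) hne

lemma K33plus_connected : K33plus.Connected := by
  have common_walk : ∀ x y, ∃ z t, (x = z ∨ K33plus.Adj x z) ∧ (z = t ∨ K33plus.Adj z t) ∧
      (t = y ∨ K33plus.Adj t y) := by decide
  have reachable_of_eq_or_adj {x y} (h : x = y ∨ K33plus.Adj x y) : K33plus.Reachable x y :=
    h.elim (fun h => h ▸ .rfl) SimpleGraph.Adj.reachable
  refine ⟨fun x y => ?_⟩
  obtain ⟨z, t, hxz, hzt, hty⟩ := common_walk x y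
  exact (reachable_of_eq_or_adj hxz).trans
    ((reachable_of_eq_or_adj hzt).trans (reachable_of_eq_or_adj hty))

set_option maxRecDepth 10000 in
/-- Any two edges of `K₃,₃⁺` share an endvertex or are joined by an edge. -/
lemma K33plus_edges_touch : ∀ a b, K33plus.Adj a b → ∀ c d, K33plus.Adj c d →
    (a = c ∨ K33plus.Adj a c) ∨ (a = d ∨ K33plus.Adj a d) ∨
      (b = c ∨ K33plus.Adj b c) ∨ (b = d ∨ K33plus.Adj b d) := by
  decide

lemma IsInducedMatching.card_le_one_of_K33plus {M : Finset (Sym2 (Fin 3 ⊕ Fin 3 ⊕ Unit))}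
    (hM : IsInducedMatching K33plus M) : M.card ≤ 1 := by
  refine Finset.card_le_one.2 fun e he f hf => by_contra fun hne => ?_
  have hsep := hM.2 e he f hf hne
  have he' := hM.1 he
  have hf' := hM.1 hf
  induction e with | _ a b
  induction f with | _ c d
  have hac := hsep a (by simp) c (by simp)
  have had := hsep a (by simp) d (by simp)
  have hbc := hsep b (by simp) c (by simp)
  have hbd := hsep b (by simp) d (by simp)
  have := K33plus_edges_touch a b he' c d hf'
  tauto

lemma indMatchNum_K33plus : indMatchNum K33plus = 1 := by
  apply le_antisymm
  · refine csSup_le' ?_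
    rintro n ⟨M, hM, rfl⟩
    exact hM.card_le_one_of_K33plus
  · have hedge : s(Sum.inl 0, Sum.inr (Sum.inr ())) ∈ K33plus.edgeSet := by
      rw [SimpleGraph.mem_edgeSet]
      decide
    simpa using (isInducedMatching_singleton hedge).card_le_indMatchNum

/-- `K₃,₃⁺` is connected, has maximum degree `3`, `7` vertices, and induced matching
number `1`; in particular `ν_s(K₃,₃⁺) < n(K₃,₃⁺)/((⌈3/2⌉+1)(⌊3/2⌋+1)) = 7/6`, so the
bound `ν_s(G) ≥ n(G)/((⌈Δ/2⌉+1)(⌊Δ/2⌋+1))` fails for `K₃,₃⁺`. -/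
theorem K33plus_counterexample :
    K33plus.Connected ∧
    K33plus.maxDegree = 3 ∧
    Fintype.card (Fin 3 ⊕ Fin 3 ⊕ Unit) = 7 ∧
    indMatchNum K33plus = 1 ∧
    (indMatchNum K33plus : ℚ) <
      (Fintype.card (Fin 3 ⊕ Fin 3 ⊕ Unit) : ℚ) /
        (((⌈(3 : ℚ) / 2⌉ : ℚ) + 1) * ((⌊(3 : ℚ) / 2⌋ : ℚ) + 1)) := by
  have hceil : ⌈(3 : ℚ) / 2⌉ = 2 := by norm_num [Int.ceil_eq_iff]
  have hfloor : ⌊(3 : ℚ) / 2⌋ = 1 := by norm_num [Int.floor_eq_iff]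
  refine ⟨K33plus_connected, by decide, by decide, indMatchNum_K33plus, ?_⟩
  rw [indMatchNum_K33plus, hceil, hfloor]
  norm_num
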